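/- The first cohomology of the Melikian algebra with values in the adjoint representation vanishes: H¹(M, M) = 0; equivalently, every derivation of M is inner. -/

import Mathlib

open scoped BigOperators

namespace Melikian

/-- Index set for monomials in the truncated polynomial algebra
`A(2) = F[x₁,x₂]/(x₁⁵,x₂⁵)`. -/
abbrev Idx : Type := Fin 5 × Fin 5

/-- The truncated polynomial algebra `A(2)`, as functions on monomial exponents. -/
abbrev A (F : Type*) [Field F] : Type _ := Idx → F

variable {F : Type*} [Field F]

/-- The monomial `x^b = x₁^{b₁} x₂^{b₂}`. -/
def X (b : Idx) : A F := fun a => if a = b then 1 else 0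

/-- Truncated multiplication of `A(2)`. -/
def mulA (f g : A F) : A F := fun a =>
  ∑ b : Idx, ∑ c : Idx,
    if b.1.val + c.1.val = a.1.val ∧ b.2.val + c.2.val = a.2.val then f b * g c else 0

/-- Partial derivative `∂/∂x₁` on `A(2)`. -/
def d1 (f : A F) : A F := fun a =>
  if h : a.1.val + 1 < 5 then ((a.1.val + 1 : ℕ) : F) * f (⟨a.1.val + 1, h⟩, a.2) else 0

/-- Partial derivative `∂/∂x₂` on `A(2)`. -/
def d2 (f : A F) : A F := fun a =>
  if h : a.2.val + 1 < 5 then ((a.2.val + 1 : ℕ) : F) * f (a.1, ⟨a.2.val + 1, h⟩) else 0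

/-- The Witt–Jacobson algebra `W(2)` as a free `A(2)`-module with basis `D₁, D₂`:
an element `(f₁, f₂)` stands for `f₁D₁ + f₂D₂`. -/
abbrev W (F : Type*) [Field F] : Type _ := A F × A F

/-- Action of a derivation `D = f₁D₁+f₂D₂ ∈ W(2)` on `A(2)`. -/
def Dw (D : W F) (g : A F) : A F := mulA D.1 (d1 g) + mulA D.2 (d2 g)

/-- Divergence `div(f₁D₁+f₂D₂) = D₁(f₁) + D₂(f₂)`. -/
def divW (D : W F) : A F := d1 D.1 + d2 D.2

/-- The usual bracket of `W(2)`. -/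
def brW (D E : W F) : W F := (Dw D E.1 - Dw E D.1, Dw D E.2 - Dw E D.2)

/-- Multiplication of an element of `W(2)` by a truncated polynomial. -/
def smulA (f : A F) (D : W F) : W F := (mulA f D.1, mulA f D.2)

/-- The Melikian algebra `M = A(2) ⊕ W(2) ⊕ W(2)~` as an `F`-vector space. -/
abbrev Mel (F : Type*) [Field F] : Type _ := A F × W F × W F

/-- Inclusion of `A(2)` into `M`. -/
def ιA (f : A F) : Mel F := (f, 0, 0)

/-- Inclusion of `W(2)` into `M`. -/
def ιW (D : W F) : Mel F := (0, D, 0)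

/-- Inclusion of the second copy `W(2)~` into `M`, `D ↦ D̃`. -/
def ιT (D : W F) : Mel F := (0, 0, D)

/-- The Melikian bracket on `M = A(2) ⊕ W(2) ⊕ W(2)~`, defined by the rules
`[D,Ẽ] = [D,E]~ + 2 div(D) Ẽ`, `[D,f] = D(f) − 2 div(D) f`,
`[f₁D̃₁+f₂D̃₂, g₁D̃₁+g₂D̃₂] = f₁g₂ − f₂g₁`, `[f,Ẽ] = fE`,
`[f,g] = 2(gD₂(f) − fD₂(g))D̃₁ + 2(fD₁(g) − gD₁(f))D̃₂`,
extended bilinearly and antisymmetrically (with the standard bracket on `W(2)`). -/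
def brM (u v : Mel F) : Mel F :=
  ( (Dw u.2.1 v.1 - (2 : F) • mulA (divW u.2.1) v.1)
      - (Dw v.2.1 u.1 - (2 : F) • mulA (divW v.2.1) u.1)
      + (mulA u.2.2.1 v.2.2.2 - mulA u.2.2.2 v.2.2.1)
  , brW u.2.1 v.2.1 + smulA u.1 v.2.2 - smulA v.1 u.2.2
  , (brW u.2.1 v.2.2 + (2 : F) • smulA (divW u.2.1) v.2.2)
      - (brW v.2.1 u.2.2 + (2 : F) • smulA (divW v.2.1) u.2.2)
      + ((2 : F) • (mulA v.1 (d2 u.1) - mulA u.1 (d2 v.1)),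
         (2 : F) • (mulA u.1 (d1 v.1) - mulA v.1 (d1 u.1))) )

/-- `x^b D_i` as an element of `W(2)` (`i = 0` stands for `D₁`, `i = 1` for `D₂`). -/
def wOf (i : Fin 2) (b : Idx) : W F := if i = 0 then (X b, 0) else (0, X b)

/-- The element `x₁D₁ ∈ M`. -/
def x1D1 : Mel F := ιW (X (1, 0), 0)

/-- The element `x₂D₂ ∈ M`. -/
def x2D2 : Mel F := ιW (0, X (0, 1))

/-- The element `1 ∈ A(2) ⊂ M`. -/
def oneM : Mel F := ιA (X (0, 0))

/-- The element `D_{i+1} ∈ W(2) ⊂ M`. -/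
def DD (i : Fin 2) : Mel F := ιW (wOf i (0, 0))

/-- The element `D̃_{i+1} ∈ W(2)~ ⊂ M`. -/
def TT (i : Fin 2) : Mel F := ιT (wOf i (0, 0))

/-- Total degree of a monomial exponent. -/
def degA (b : Idx) : ℤ := (b.1.val : ℤ) + (b.2.val : ℤ)

/-- The degree-`d` piece `M_d` of the `ℤ`-grading of the Melikian algebra:
`deg_M(f) = 3 deg(f) − 2` on `A(2)`, `deg_M(x^bD_i) = 3(|b|−1)` on `W(2)`, and
`deg_M(x^bD̃_i) = 3(|b|−1)+2` on `W(2)~`. -/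
def Md (d : ℤ) : Submodule F (Mel F) :=
  Submodule.span F
    ( {m | ∃ b : Idx, m = ιA (X b) ∧ d = 3 * degA b - 2}
      ∪ {m | ∃ b : Idx, ∃ i : Fin 2, m = ιW (wOf i b) ∧ d = 3 * (degA b - 1)}
      ∪ {m | ∃ b : Idx, ∃ i : Fin 2, m = ιT (wOf i b) ∧ d = 3 * (degA b - 1) + 2} )

/-- The part `M_{≥ d}` of the Melikian algebra. -/
def Mge (d : ℤ) : Submodule F (Mel F) := ⨆ e : ℤ, ⨆ _ : d ≤ e, (Md e : Submodule F (Mel F))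

/-- The squaring `Sq(γ)(x,y) = Σ_{k=1}^{4} [γ^k(x), γ^{5−k}(y)] / (k!(5−k)!)`
of an operator `γ` on the Melikian algebra (characteristic 5). -/
def melSq (γ : Mel F → Mel F) (x y : Mel F) : Mel F :=
  ∑ k ∈ Finset.Icc 1 4,
    ((Nat.factorial k * Nat.factorial (5 - k) : ℕ) : F)⁻¹ • brM (γ^[k] x) (γ^[5 - k] y)

/-- The Chevalley–Eilenberg coboundary of a linear 1-cochain of `M` with values in the
adjoint representation. -/
def cob (g : Mel F →ₗ[F] Mel F) (x y : Mel F) : Mel F :=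
  brM x (g y) - brM y (g x) - g (brM x y)

section AlgebraStructure

/-- The monomial `x₁^i x₂^j` with arbitrary natural exponents; it vanishes as soon as one exponent
is at least `5`. -/
def mon (i j : ℕ) : A F := fun a => if a.1.val = i ∧ a.2.val = j then 1 else 0

theorem mon_eq_zero {i j : ℕ} (h : 5 ≤ i ∨ 5 ≤ j) : (mon i j : A F) = 0 := by
  funext a
  have : ¬ (a.1.val = i ∧ a.2.val = j) := by have := a.1.isLt; have := a.2.isLt; omega
  simp [mon, this]

theorem A_eq_sum_mon (f : A F) : f = ∑ b : Idx, f b • mon b.1.val b.2.val := by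
  funext a
  rw [Finset.sum_apply, Finset.sum_eq_single a]
  · simp [mon]
  · intro b _ hb
    have : ¬ (a.1.val = b.1.val ∧ a.2.val = b.2.val) := fun h =>
      hb (Prod.ext (Fin.ext h.1.symm) (Fin.ext h.2.symm))
    simp [mon, this]
  · simp

/-- To prove a property of all truncated polynomials it suffices to treat monomials and linear
combinations. -/
theorem A_induction {P : A F → Prop} (hmon : ∀ i j, P (mon i j))
    (hadd : ∀ f g, P f → P g → P (f + g)) (hsmul : ∀ (c : F) f, P f → P (c • f)) (f : A F) :
    P f := by
  rw [A_eq_sum_mon f]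
  refine Finset.sum_induction _ P hadd ?_ fun b _ => hsmul _ _ (hmon _ _)
  simpa using hsmul 0 _ (hmon 0 0)

theorem mulA_add (f g h : A F) : mulA f (g + h) = mulA f g + mulA f h := by
  funext a
  simp only [mulA, Pi.add_apply, ← Finset.sum_add_distrib]
  refine Finset.sum_congr rfl fun b _ => Finset.sum_congr rfl fun c _ => ?_
  split_ifs <;> ring

theorem add_mulA (f g h : A F) : mulA (f + g) h = mulA f h + mulA g h := by
  funext a
  simp only [mulA, Pi.add_apply, ← Finset.sum_add_distrib]
  refine Finset.sum_congr rfl fun b _ => Finset.sum_congr rfl fun c _ => ?_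
  split_ifs <;> ring

theorem mulA_smul (k : F) (f g : A F) : mulA f (k • g) = k • mulA f g := by
  funext a
  simp only [mulA, Pi.smul_apply, smul_eq_mul, Finset.mul_sum]
  refine Finset.sum_congr rfl fun b _ => Finset.sum_congr rfl fun c _ => ?_
  split_ifs <;> ring

theorem smul_mulA (k : F) (f g : A F) : mulA (k • f) g = k • mulA f g := by
  funext a
  simp only [mulA, Pi.smul_apply, smul_eq_mul, Finset.mul_sum]
  refine Finset.sum_congr rfl fun b _ => Finset.sum_congr rfl fun c _ => ?_
  split_ifs <;> ring

theorem mulA_zero (f : A F) : mulA f 0 = 0 := by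
  simpa using mulA_smul 0 f 0

theorem zero_mulA (f : A F) : mulA 0 f = 0 := by
  simpa using smul_mulA 0 0 f

theorem d1_add (f g : A F) : d1 (f + g) = d1 f + d1 g := by
  funext a
  simp only [d1, Pi.add_apply]
  split_ifs <;> ring

theorem d2_add (f g : A F) : d2 (f + g) = d2 f + d2 g := by
  funext a
  simp only [d2, Pi.add_apply]
  split_ifs <;> ring

theorem d1_smul (k : F) (f : A F) : d1 (k • f) = k • d1 f := by
  funext a
  simp only [d1, Pi.smul_apply, smul_eq_mul]
  split_ifs <;> ring

theorem d2_smul (k : F) (f : A F) : d2 (k • f) = k • d2 f := by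
  funext a
  simp only [d2, Pi.smul_apply, smul_eq_mul]
  split_ifs <;> ring

theorem d1_zero : d1 (0 : A F) = 0 := by
  simpa using d1_smul (0 : F) 0

theorem d2_zero : d2 (0 : A F) = 0 := by
  simpa using d2_smul (0 : F) 0

theorem mulA_mon (i j k l : ℕ) :
    mulA (mon i j : A F) (mon k l) = mon (i + k) (j + l) := by
  by_cases h : 5 ≤ i ∨ 5 ≤ j
  · rw [mon_eq_zero h, zero_mulA, mon_eq_zero (by omega)]
  by_cases h' : 5 ≤ k ∨ 5 ≤ l
  · rw [mon_eq_zero h', mulA_zero, mon_eq_zero (by omega)]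
  push Not at h h'
  funext a
  simp only [mulA]
  rw [Finset.sum_eq_single (⟨i, h.1⟩, ⟨j, h.2⟩), Finset.sum_eq_single (⟨k, h'.1⟩, ⟨l, h'.2⟩)]
  · simp [mon, eq_comm]
  · intro c _ hc
    have : ¬ (c.1.val = k ∧ c.2.val = l) := fun h => hc (Prod.ext (Fin.ext h.1) (Fin.ext h.2))
    simp [mon, this]
  · simp
  · intro b _ hb
    have : ¬ (b.1.val = i ∧ b.2.val = j) := fun h => hb (Prod.ext (Fin.ext h.1) (Fin.ext h.2))
    simp [mon, this]
  · simp

theorem d1_mon [CharP F 5] (i j : ℕ) : d1 (mon i j : A F) = (i : F) • mon (i - 1) j := by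
  funext a
  have h5 : ((5 : ℕ) : F) = 0 := CharP.cast_eq_zero F 5
  rcases i with _ | i
  · simp [d1, mon]
  · rcases Nat.lt_trichotomy i 4 with h | rfl | h
    · by_cases ha : a.1.val = i
      · simp [d1, mon, ha, h]
      · simp [d1, mon, ha]
    · simp only [d1, mon, h5]
      split_ifs <;> simp_all
    · rw [mon_eq_zero (Or.inl (by omega)), mon_eq_zero (Or.inl (by omega)), d1_zero]
      simp

theorem d2_mon [CharP F 5] (i j : ℕ) : d2 (mon i j : A F) = (j : F) • mon i (j - 1) := by
  funext a
  have h5 : ((5 : ℕ) : F) = 0 := CharP.cast_eq_zero F 5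
  rcases j with _ | j
  · simp [d2, mon]
  · rcases Nat.lt_trichotomy j 4 with h | rfl | h
    · by_cases ha : a.2.val = j
      · simp [d2, mon, ha, h]
      · simp [d2, mon, ha]
    · simp only [d2, mon, h5]
      split_ifs <;> simp_all
    · rw [mon_eq_zero (Or.inr (by omega)), mon_eq_zero (Or.inr (by omega)), d2_zero]
      simp

theorem mulA_comm (f g : A F) : mulA f g = mulA g f := by
  induction f using A_induction with
  | hmon i j =>
    induction g using A_induction with
    | hmon k l => rw [mulA_mon, mulA_mon, add_comm i, add_comm j]
    | hadd g g' h h' => rw [mulA_add, add_mulA, h, h']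
    | hsmul c g h => rw [mulA_smul, smul_mulA, h]
  | hadd f f' h h' => rw [mulA_add, add_mulA, h, h']
  | hsmul c f h => rw [mulA_smul, smul_mulA, h]

theorem mulA_assoc (f g h : A F) : mulA (mulA f g) h = mulA f (mulA g h) := by
  induction f using A_induction with
  | hmon i j =>
    induction g using A_induction with
    | hmon k l =>
      induction h using A_induction with
      | hmon m n => simp only [mulA_mon, add_assoc]
      | hadd g g' h h' => simp only [mulA_add, h, h']
      | hsmul c g h => simp only [mulA_smul, h]
    | hadd g g' h h' => simp only [mulA_add, add_mulA, h, h']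
    | hsmul c g h => simp only [mulA_smul, smul_mulA, h]
  | hadd f f' h h' => simp only [add_mulA, h, h']
  | hsmul c f h => simp only [smul_mulA, h]

theorem one_mulA (f : A F) : mulA (mon 0 0) f = f := by
  induction f using A_induction with
  | hmon i j => simp [mulA_mon]
  | hadd g g' h h' => rw [mulA_add, h, h']
  | hsmul c g h => rw [mulA_smul, h]

theorem mulA_one (f : A F) : mulA f (mon 0 0) = f := by
  rw [mulA_comm, one_mulA]

theorem d1_mulA [CharP F 5] (f g : A F) : d1 (mulA f g) = mulA f (d1 g) + mulA g (d1 f) := by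
  induction f using A_induction with
  | hmon i j =>
    induction g using A_induction with
    | hmon k l =>
      simp only [mulA_mon, d1_mon, mulA_smul]
      rcases i with _ | i <;> rcases k with _ | k <;>
        simp [add_comm, add_left_comm, add_assoc, add_smul, two_smul]
    | hadd g g' h h' => simp only [mulA_add, add_mulA, d1_add, h, h']; abel
    | hsmul c g h => simp only [mulA_smul, smul_mulA, d1_smul, h, smul_add]
  | hadd f f' h h' => simp only [mulA_add, add_mulA, d1_add, h, h']; abel
  | hsmul c f h => simp only [mulA_smul, smul_mulA, d1_smul, h, smul_add]

theorem d2_mulA [CharP F 5] (f g : A F) : d2 (mulA f g) = mulA f (d2 g) + mulA g (d2 f) := by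
  induction f using A_induction with
  | hmon i j =>
    induction g using A_induction with
    | hmon k l =>
      simp only [mulA_mon, d2_mon, mulA_smul]
      rcases j with _ | i <;> rcases l with _ | k <;>
        simp [add_comm, add_left_comm, add_assoc, add_smul, two_smul]
    | hadd g g' h h' => simp only [mulA_add, add_mulA, d2_add, h, h']; abel
    | hsmul c g h => simp only [mulA_smul, smul_mulA, d2_smul, h, smul_add]
  | hadd f f' h h' => simp only [mulA_add, add_mulA, d2_add, h, h']; abel
  | hsmul c f h => simp only [mulA_smul, smul_mulA, d2_smul, h, smul_add]

theorem d2_d1 [CharP F 5] (f : A F) : d2 (d1 f) = d1 (d2 f) := by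
  induction f using A_induction with
  | hmon i j => simp only [d1_mon, d2_mon, d1_smul, d2_smul, smul_smul, mul_comm]
  | hadd f f' h h' => simp only [d1_add, d2_add, h, h']
  | hsmul c f h => simp only [d1_smul, d2_smul, h]

end AlgebraStructure

section Jacobi

/-- The bracket of the Melikian algebra over an arbitrary commutative ring with two operators. -/
def abr {R : Type*} [CommRing R] (p q : R → R) (u v : R × (R × R) × (R × R)) :
    R × (R × R) × (R × R) :=
  ((u.2.1.1 * p v.1 + u.2.1.2 * q v.1 - 2 * ((p u.2.1.1 + q u.2.1.2) * v.1))
      - (v.2.1.1 * p u.1 + v.2.1.2 * q u.1 - 2 * ((p v.2.1.1 + q v.2.1.2) * u.1))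
      + (u.2.2.1 * v.2.2.2 - u.2.2.2 * v.2.2.1),
    ((u.2.1.1 * p v.2.1.1 + u.2.1.2 * q v.2.1.1) - (v.2.1.1 * p u.2.1.1 + v.2.1.2 * q u.2.1.1)
        + u.1 * v.2.2.1 - v.1 * u.2.2.1,
      (u.2.1.1 * p v.2.1.2 + u.2.1.2 * q v.2.1.2) - (v.2.1.1 * p u.2.1.2 + v.2.1.2 * q u.2.1.2)
        + u.1 * v.2.2.2 - v.1 * u.2.2.2),
    (((u.2.1.1 * p v.2.2.1 + u.2.1.2 * q v.2.2.1) - (v.2.2.1 * p u.2.1.1 + v.2.2.2 * q u.2.1.1)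
        + 2 * ((p u.2.1.1 + q u.2.1.2) * v.2.2.1))
      - ((v.2.1.1 * p u.2.2.1 + v.2.1.2 * q u.2.2.1) - (u.2.2.1 * p v.2.1.1 + u.2.2.2 * q v.2.1.1)
        + 2 * ((p v.2.1.1 + q v.2.1.2) * u.2.2.1))
      + 2 * (v.1 * q u.1 - u.1 * q v.1),
     ((u.2.1.1 * p v.2.2.2 + u.2.1.2 * q v.2.2.2) - (v.2.2.1 * p u.2.1.2 + v.2.2.2 * q u.2.1.2)
        + 2 * ((p u.2.1.1 + q u.2.1.2) * v.2.2.2))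
      - ((v.2.1.1 * p u.2.2.2 + v.2.1.2 * q u.2.2.2) - (u.2.2.1 * p v.2.1.2 + u.2.2.2 * q v.2.1.2)
        + 2 * ((p v.2.1.1 + q v.2.1.2) * u.2.2.2))
      + 2 * (u.1 * p v.1 - v.1 * p u.1)))

theorem abr_jacobi {R : Type*} [CommRing R] (h5 : (5 : R) = 0) (p q : Derivation ℤ R R)
    (hpq : ∀ f, q (p f) = p (q f)) (u v w : R × (R × R) × (R × R)) :
    abr p q u (abr p q v w) = abr p q (abr p q u v) w + abr p q v (abr p q u w) := by
  obtain ⟨a, ⟨b, c⟩, d, e⟩ := u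
  obtain ⟨a', ⟨b', c'⟩, d', e'⟩ := v
  obtain ⟨a₂, ⟨b₂, c₂⟩, d₂, e₂⟩ := w
  have p2 : p 2 = 0 := p.map_natCast 2
  have q2 : q 2 = 0 := q.map_natCast 2
  have h10 : (10 : R) = 0 := by linear_combination 2 * h5
  simp only [abr, Prod.mk_add_mk, Prod.mk.injEq, map_add, map_sub, Derivation.leibniz, smul_eq_mul,
    p2, q2, hpq]
  refine ⟨?_, ⟨?_, ?_⟩, ?_, ?_⟩
  · rw [← sub_eq_zero]; ring_nf; simp only [h5, mul_zero, add_zero, sub_zero]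
  · ring
  · ring
  · rw [← sub_eq_zero]; ring_nf; simp only [h5, h10, mul_zero, neg_zero, add_zero, sub_zero]
  · rw [← sub_eq_zero]; ring_nf; simp only [h5, h10, mul_zero, neg_zero, add_zero, sub_zero]

/-- The space `A(2)`, whose default product is the pointwise one, as a type carrying the truncated
multiplication. -/
def TruncPoly (F : Type*) [Field F] : Type _ := A F

instance : AddCommGroup (TruncPoly F) := inferInstanceAs (AddCommGroup (A F))

instance : CommRing (TruncPoly F) :=
  { (inferInstance : AddCommGroup (TruncPoly F)) with
    mul := fun f g => mulA f g
    one := (mon 0 0 : A F)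
    left_distrib := mulA_add
    right_distrib := add_mulA
    zero_mul := zero_mulA
    mul_zero := mulA_zero
    mul_assoc := mulA_assoc
    one_mul := one_mulA
    mul_one := mulA_one
    mul_comm := mulA_comm }

/-- `∂/∂x₁` as a derivation of the truncated polynomial ring. -/
def deriv1 [CharP F 5] : Derivation ℤ (TruncPoly F) (TruncPoly F) :=
  Derivation.mk' (AddMonoidHom.mk' (fun f : TruncPoly F => (d1 f : A F)) d1_add).toIntLinearMap
    fun f g => d1_mulA f g

/-- `∂/∂x₂` as a derivation of the truncated polynomial ring. -/
def deriv2 [CharP F 5] : Derivation ℤ (TruncPoly F) (TruncPoly F) :=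
  Derivation.mk' (AddMonoidHom.mk' (fun f : TruncPoly F => (d2 f : A F)) d2_add).toIntLinearMap
    fun f g => d2_mulA f g

theorem TruncPoly.five_eq_zero [CharP F 5] : (5 : TruncPoly F) = 0 := by
  have h : (5 : TruncPoly F) = (5 : ℕ) • (1 : TruncPoly F) := by simp
  rw [h]
  change ((5 : ℕ) • (mon 0 0 : A F)) = 0
  funext a
  have h5 : ((5 : ℕ) : F) = 0 := CharP.cast_eq_zero F 5
  simp only [Pi.smul_apply, nsmul_eq_mul, h5, zero_mul, Pi.zero_apply]

theorem brM_eq_abr [CharP F 5] (u v : Mel F) :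
    brM u v = abr (R := TruncPoly F) (deriv1 (F := F)) (deriv2 (F := F)) u v := by
  simp only [brM, two_smul]
  simp only [abr, two_mul]
  rfl

theorem brM_jacobi [CharP F 5] (u v w : Mel F) :
    brM u (brM v w) = brM (brM u v) w + brM v (brM u w) := by
  have h : (brM : Mel F → Mel F → Mel F) = abr (R := TruncPoly F) deriv1 deriv2 :=
    funext fun u => funext fun v => brM_eq_abr u v
  rw [h]
  exact abr_jacobi TruncPoly.five_eq_zero deriv1 deriv2 (fun f => d2_d1 f) u v w

end Jacobi

section Derivations

theorem brM_add (u v w : Mel F) : brM u (v + w) = brM u v + brM u w := by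
  simp only [brM, Dw, divW, brW, smulA, Prod.fst_add, Prod.snd_add, mulA_add, add_mulA, d1_add,
    d2_add, Prod.mk_add_mk, Prod.smul_mk, Prod.mk_sub_mk, Prod.mk.injEq]
  refine ⟨?_, ⟨?_, ?_⟩, ?_, ?_⟩ <;> module

theorem brM_smul (c : F) (u v : Mel F) : brM u (c • v) = c • brM u v := by
  simp only [brM, Dw, divW, brW, smulA, Prod.smul_fst, Prod.smul_snd, mulA_smul, smul_mulA, d1_smul,
    d2_smul, Prod.mk_add_mk, Prod.smul_mk, Prod.mk_sub_mk, Prod.mk.injEq, ← smul_add]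
  refine ⟨?_, ⟨?_, ?_⟩, ?_, ?_⟩ <;> module

theorem brM_swap (u v : Mel F) : brM u v = -brM v u := by
  simp only [brM, Dw, divW, brW, smulA, Prod.mk_add_mk, Prod.smul_mk, Prod.mk_sub_mk, Prod.neg_mk,
    Prod.mk.injEq, mulA_comm u.2.2.1, mulA_comm u.2.2.2]
  refine ⟨?_, ⟨?_, ?_⟩, ?_, ?_⟩ <;> module

/-- The inner derivation `ad m` as a linear map. -/
def adM (m : Mel F) : Mel F →ₗ[F] Mel F where
  toFun := brM m
  map_add' := brM_add m
  map_smul' c := brM_smul c m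

theorem adM_apply (m x : Mel F) : adM m x = brM m x := rfl

theorem brM_zero (u : Mel F) : brM u 0 = 0 := (adM u).map_zero

theorem brM_sub (u v w : Mel F) : brM u (v - w) = brM u v - brM u w := (adM u).map_sub v w

theorem zero_brM (u : Mel F) : brM 0 u = 0 := by rw [brM_swap, brM_zero, neg_zero]

theorem add_brM (u v w : Mel F) : brM (u + v) w = brM u w + brM v w := by
  rw [brM_swap, brM_add, brM_swap w u, brM_swap w v]; abel

theorem sub_brM (u v w : Mel F) : brM (u - v) w = brM u w - brM v w := by
  rw [brM_swap, brM_sub, brM_swap w u, brM_swap w v]; abel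

/-- A linear endomorphism of `M` satisfying the Leibniz rule for the Melikian bracket. -/
def IsDer (D : Mel F →ₗ[F] Mel F) : Prop :=
  ∀ x y : Mel F, D (brM x y) = brM (D x) y + brM x (D y)

theorem IsDer.sub_adM [CharP F 5] {D : Mel F →ₗ[F] Mel F} (hD : IsDer D) (m : Mel F) :
    IsDer (D - adM m) := by
  intro x y
  simp only [LinearMap.sub_apply, adM_apply, hD x y, brM_jacobi m x y, brM_sub, sub_brM]
  abel

end Derivations

section Weights

/-- The five components of an element of `M` in the order `A, W₁, W₂, W̃₁, W̃₂`. -/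
def co (x : Mel F) : Fin 5 → A F := ![x.1, x.2.1.1, x.2.1.2, x.2.2.1, x.2.2.2]

/-- The element of `M` with given components. -/
def ofCo (g : Fin 5 → A F) : Mel F := (g 0, (g 1, g 2), (g 3, g 4))

theorem co_ofCo (g : Fin 5 → A F) : co (ofCo g) = g := by
  funext n; fin_cases n <;> rfl

theorem co_add (x y : Mel F) : co (x + y) = co x + co y := by
  funext n; fin_cases n <;> rfl

theorem co_smul (c : F) (x : Mel F) : co (c • x) = c • co x := by
  funext n; fin_cases n <;> rfl

theorem co_neg (x : Mel F) : co (-x) = -co x := by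
  funext n; fin_cases n <;> rfl

theorem co_zero : co (0 : Mel F) = 0 := by
  funext n; fin_cases n <;> rfl

theorem co_injective : Function.Injective (co : Mel F → Fin 5 → A F) := by
  intro x y h
  have h' := fun n => congrFun h n
  exact Prod.ext (h' 0) (Prod.ext (Prod.ext (h' 1) (h' 2)) (Prod.ext (h' 3) (h' 4)))

/-- The toral element `x₁D₁` or `x₂D₂`. -/
def tor (r : Fin 2) : Mel F := ![ιW (mon 1 0, 0), ιW (0, mon 0 1)] r

/-- The weight of a monomial in a given component with respect to `tor r`. -/
def wt (r : Fin 2) (n : Fin 5) (a : Idx) : ZMod 5 :=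
  ![(a.1.val : ZMod 5) + ![-2, -1, 0, 1, 2] n, (a.2.val : ZMod 5) + ![-2, 0, -1, 2, 1] n] r

/-- The embedding of the prime field. -/
def cst [CharP F 5] : ZMod 5 →+* F := ZMod.castHom (dvd_refl 5) F

theorem cst_ne_zero [CharP F 5] {k : ZMod 5} (hk : k ≠ 0) : (cst k : F) ≠ 0 := by
  have : Fact (Nat.Prime 5) := ⟨Nat.prime_five⟩
  rwa [Ne, map_eq_zero]

theorem mulA_x1_d1 [CharP F 5] (f : A F) (a : Idx) :
    mulA (mon 1 0) (d1 f) a = (a.1.val : F) * f a := by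
  induction f using A_induction with
  | hmon i j =>
    rcases i with _ | i
    · simp only [d1_mon, mulA_smul, mulA_mon]
      simp +contextual [mon]
    · simp only [d1_mon, mulA_smul, mulA_mon, Pi.smul_apply, smul_eq_mul]
      by_cases h : a.1.val = i + 1
      · simp [mon, h, add_comm]
      · simp [mon, h, add_comm]
  | hadd f g hf hg => simp only [d1_add, mulA_add, Pi.add_apply, hf, hg, mul_add]
  | hsmul c f hf => simp only [d1_smul, mulA_smul, Pi.smul_apply, hf, smul_eq_mul]; ring

theorem mulA_x2_d2 [CharP F 5] (f : A F) (a : Idx) :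
    mulA (mon 0 1) (d2 f) a = (a.2.val : F) * f a := by
  induction f using A_induction with
  | hmon i j =>
    rcases j with _ | j
    · simp only [d2_mon, mulA_smul, mulA_mon]
      simp +contextual [mon]
    · simp only [d2_mon, mulA_smul, mulA_mon, Pi.smul_apply, smul_eq_mul]
      by_cases h : a.2.val = j + 1
      · simp [mon, h, add_comm]
      · simp [mon, h, add_comm]
  | hadd f g hf hg => simp only [d2_add, mulA_add, Pi.add_apply, hf, hg, mul_add]
  | hsmul c f hf => simp only [d2_smul, mulA_smul, Pi.smul_apply, hf, smul_eq_mul]; ring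

theorem co_brM_tor [CharP F 5] (r : Fin 2) (x : Mel F) (n : Fin 5) (a : Idx) :
    co (brM (tor r) x) n a = cst (wt r n a) * co x n a := by
  fin_cases r <;> fin_cases n <;>
    simp [co, tor, wt, brM, Dw, divW, brW, smulA, ιW, d1_mon, d2_mon, zero_mulA, mulA_zero,
      d1_zero, d2_zero, one_mulA, mulA_one, mulA_x1_d1, mulA_x2_d2, map_ofNat cst] <;> ring

/-- `D` sends each toral element `tor r` to an element commuting with it. -/
def TorusAdapted (D : Mel F →ₗ[F] Mel F) : Prop := ∀ r : Fin 2, brM (tor r) (D (tor r)) = 0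

theorem IsDer.exists_torusAdapted [CharP F 5] {D : Mel F →ₗ[F] Mel F} (hD : IsDer D) :
    ∃ m : Mel F, TorusAdapted (D - adM m) := by
  have h01 : brM (tor 0) (tor 1) = (0 : Mel F) := by
    simp [tor, brM, Dw, divW, brW, smulA, ιW, d1_mon, d2_mon, zero_mulA, mulA_zero,
      d1_zero, d2_zero]
  have hcomm (n : Fin 5) (a : Idx) : cst (wt 0 n a) * co (D (tor 1)) n a =
      cst (wt 1 n a) * co (D (tor 0)) n a := by
    have h := hD (tor 0) (tor 1)
    rw [h01, map_zero, brM_swap (D (tor 0))] at h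
    have h' := congrFun (congrFun (congrArg co h) n) a
    simp only [co_zero, co_add, co_neg, Pi.add_apply, Pi.neg_apply, co_brM_tor,
      Pi.zero_apply] at h'
    linear_combination -h'
  refine ⟨ofCo fun n a => if wt 0 n a = 0 then -(co (D (tor 1)) n a / cst (wt 1 n a))
    else -(co (D (tor 0)) n a / cst (wt 0 n a)), fun r => co_injective ?_⟩
  funext n a
  rw [LinearMap.sub_apply, adM_apply, brM_swap _ (tor r), sub_neg_eq_add]
  simp only [co_brM_tor, co_add, co_ofCo, Pi.add_apply, co_zero, Pi.zero_apply]
  have hc := hcomm n a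
  by_cases hw : wt 0 n a = 0
  · by_cases hw' : wt 1 n a = 0
    · fin_cases r <;> simp [hw, hw']
    · have : (cst (wt 1 n a) : F) ≠ 0 := cst_ne_zero hw'
      fin_cases r
      · simp [hw]
      · simp only [Fin.mk_one, hw, if_true]
        field_simp
        ring
  · have : (cst (wt 0 n a) : F) ≠ 0 := cst_ne_zero hw
    fin_cases r
    · simp only [Fin.zero_eta, hw, if_false]
      field_simp
      ring
    · simp only [Fin.mk_one, hw, if_false]
      field_simp
      linear_combination cst (wt 1 n a) * hc

theorem IsDer.co_eq_zero [CharP F 5] {D : Mel F →ₗ[F] Mel F} (hD : IsDer D) (hT : TorusAdapted D)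
    {e : Mel F} {r : Fin 2} {k : ZMod 5} (he : brM (tor r) e = (cst k : F) • e) {n : Fin 5}
    {a : Idx} (hk : wt r n a ≠ k) : co (D e) n a = 0 := by
  have h1 := hD (tor r) e
  have h2 := brM_jacobi (tor r) (D (tor r)) e
  rw [hT r, zero_brM, zero_add, he, brM_smul] at h2
  rw [he, map_smul] at h1
  have h1' := congrFun (congrFun (congrArg co h1) n) a
  have h2' := congrFun (congrFun (congrArg co h2) n) a
  simp only [co_brM_tor, co_add, co_smul, Pi.add_apply, Pi.smul_apply, smul_eq_mul] at h1' h2'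
  have hne : (cst (wt r n a) - cst k : F) ≠ 0 := by
    rw [← map_sub]
    exact cst_ne_zero (sub_ne_zero.mpr hk)
  have : (cst (wt r n a) - cst k : F) ^ 2 * co (D e) n a = 0 := by
    linear_combination (cst k - cst (wt r n a)) * h1' - h2'
  exact (mul_eq_zero.mp this).resolve_left (pow_ne_zero 2 hne)

theorem eq_smul_mon {f : A F} {i j : ℕ} (hi : i < 5) (hj : j < 5)
    (h : ∀ a : Idx, ¬ (a.1.val = i ∧ a.2.val = j) → f a = 0) :
    f = f (⟨i, hi⟩, ⟨j, hj⟩) • mon i j := by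
  funext a
  by_cases ha : a.1.val = i ∧ a.2.val = j
  · have : a = (⟨i, hi⟩, ⟨j, hj⟩) := Prod.ext (Fin.ext ha.1) (Fin.ext ha.2)
    simp [this, mon]
  · simp [h a ha, mon, ha]

theorem IsDer.exists_coeff [CharP F 5] {D : Mel F →ₗ[F] Mel F} (hD : IsDer D)
    (hT : TorusAdapted D) {e : Mel F} (k l : ZMod 5) (hk : brM (tor 0) e = (cst k : F) • e)
    (hl : brM (tor 1) e = (cst l : F) • e) :
    ∃ c : Fin 5 → F, D e = (c 0 • mon (k + 2).val (l + 2).val,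
      (c 1 • mon (k + 1).val l.val, c 2 • mon k.val (l + 1).val),
      (c 3 • mon (k - 1).val (l - 2).val, c 4 • mon (k - 2).val (l - 1).val)) := by
  have key (n : Fin 5) (i j : ZMod 5)
      (hij : ∀ a : Idx, ¬ (a.1.val = i.val ∧ a.2.val = j.val) → wt 0 n a ≠ k ∨ wt 1 n a ≠ l) :
      co (D e) n = co (D e) n (⟨i.val, i.val_lt⟩, ⟨j.val, j.val_lt⟩) • mon i.val j.val :=
    eq_smul_mon i.val_lt j.val_lt fun a ha =>
      (hij a ha).elim (hD.co_eq_zero hT hk) (hD.co_eq_zero hT hl)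
  refine ⟨![_, _, _, _, _], Prod.ext (key 0 (k + 2) (l + 2) ?_)
    (Prod.ext (Prod.ext (key 1 (k + 1) l ?_) (key 2 k (l + 1) ?_))
      (Prod.ext (key 3 (k - 1) (l - 2) ?_) (key 4 (k - 2) (l - 1) ?_)))⟩ <;>
  · clear key hk hl
    revert k l
    decide

end Weights

section Normalization

/-- The element `D̃₁`. -/
def tD1 : Mel F := (0, (0, 0), (mon 0 0, 0))

/-- The element `D̃₂`. -/
def tD2 : Mel F := (0, (0, 0), (0, mon 0 0))

theorem brM_mk (a b c d e a' b' c' d' e' : A F) :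
    brM (a, (b, c), (d, e)) (a', (b', c'), (d', e')) =
    ((mulA b (d1 a') + mulA c (d2 a') - (2 : F) • mulA (d1 b + d2 c) a')
        - (mulA b' (d1 a) + mulA c' (d2 a) - (2 : F) • mulA (d1 b' + d2 c') a)
        + (mulA d e' - mulA e d'),
      (mulA b (d1 b') + mulA c (d2 b') - (mulA b' (d1 b) + mulA c' (d2 b))
          + mulA a d' - mulA a' d,
       mulA b (d1 c') + mulA c (d2 c') - (mulA b' (d1 c) + mulA c' (d2 c))
          + mulA a e' - mulA a' e),
      (mulA b (d1 d') + mulA c (d2 d') - (mulA d' (d1 b) + mulA e' (d2 b))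
          + (2 : F) • mulA (d1 b + d2 c) d'
        - (mulA b' (d1 d) + mulA c' (d2 d) - (mulA d (d1 b') + mulA e (d2 b'))
          + (2 : F) • mulA (d1 b' + d2 c') d)
        + (2 : F) • (mulA a' (d2 a) - mulA a (d2 a')),
       mulA b (d1 e') + mulA c (d2 e') - (mulA d' (d1 c) + mulA e' (d2 c))
          + (2 : F) • mulA (d1 b + d2 c) e'
        - (mulA b' (d1 e) + mulA c' (d2 e) - (mulA d (d1 c') + mulA e (d2 c'))
          + (2 : F) • mulA (d1 b' + d2 c') e)
        + (2 : F) • (mulA a (d1 a') - mulA a' (d1 a)))) := rfl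

theorem tor_zero_eq : (tor 0 : Mel F) = (0, (mon 1 0, 0), (0, 0)) := rfl

theorem tor_one_eq : (tor 1 : Mel F) = (0, (0, mon 0 1), (0, 0)) := rfl

theorem cst_one [CharP F 5] : (cst 1 : F) = 1 := map_one _

theorem cst_two [CharP F 5] : (cst 2 : F) = 2 := map_ofNat cst 2

theorem cst_three [CharP F 5] : (cst 3 : F) = 3 := map_ofNat cst 3

theorem five_eq_zero [CharP F 5] : (5 : F) = 0 := CharP.cast_eq_zero F 5

theorem torusAdapted_sub_adM {D : Mel F →ₗ[F] Mel F} (hT : TorusAdapted D) {m : Mel F}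
    (hm : ∀ r, brM (tor r) m = 0) : TorusAdapted (D - adM m) := by
  intro r
  rw [LinearMap.sub_apply, adM_apply, brM_sub, hT r, brM_swap m, hm, neg_zero, brM_zero, sub_zero]

theorem IsDer.exists_normalized [CharP F 5] {D : Mel F →ₗ[F] Mel F} (hD : IsDer D)
    (hT : TorusAdapted D) :
    ∃ m : Mel F, TorusAdapted (D - adM m) ∧
      (∃ b e : F, (D - adM m) tD1 = (0, (0, b • mon 1 3), (0, e • mon 4 1))) ∧
      (∃ b c e : F, (D - adM m) tD2 = (0, (b • mon 3 1, c • mon 2 2), (e • mon 1 4, 0))) := by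
  have h5 : (5 : F) = 0 := five_eq_zero
  obtain ⟨c, hc⟩ := hD.exists_coeff hT (e := tD1) 1 2
    (by simp [tor_zero_eq, tD1, brM_mk, d1_mon, d2_mon, mulA_mon, zero_mulA, mulA_zero, d1_zero,
      d2_zero, cst_one]; module)
    (by simp [tor_one_eq, tD1, brM_mk, d1_mon, d2_mon, mulA_mon, zero_mulA, mulA_zero, d1_zero,
      d2_zero, cst_two])
  obtain ⟨c', hc'⟩ := hD.exists_coeff hT (e := tD2) 2 1
    (by simp [tor_zero_eq, tD2, brM_mk, d1_mon, d2_mon, mulA_mon, zero_mulA, mulA_zero, d1_zero,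
      d2_zero, cst_two])
    (by simp [tor_one_eq, tD2, brM_mk, d1_mon, d2_mon, mulA_mon, zero_mulA, mulA_zero, d1_zero,
      d2_zero, cst_one]; module)
  change D tD1 = (c 0 • mon 3 4, (c 1 • mon 2 2, c 2 • mon 1 3), (c 3 • mon 0 0, c 4 • mon 4 1))
    at hc
  change D tD2 =
    (c' 0 • mon 4 3, (c' 1 • mon 3 1, c' 2 • mon 2 2), (c' 3 • mon 1 4, c' 4 • mon 0 0)) at hc'
  obtain ⟨g, hg⟩ : ∃ g : F, g = -c 0 := ⟨_, rfl⟩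
  refine ⟨(c 1 • mon 2 2, ((4 * c' 4 - 7 * c 3) • mon 1 0, (4 * c 3 - 2 * c' 4) • mon 0 1),
    (c' 0 • mon 4 3, g • mon 3 4)), torusAdapted_sub_adM hT fun r => ?_, ⟨c 2, c 4, ?_⟩,
    ⟨c' 1, c' 2 - c 1, c' 3, ?_⟩⟩
  · fin_cases r
    · simp [tor_zero_eq, brM_mk, d1_mon, d2_mon, mulA_mon, zero_mulA, mulA_zero, d1_zero,
        d2_zero, d1_smul, d2_smul, mulA_smul, smul_mulA]
      refine ⟨?_, ?_, ?_⟩ <;> match_scalars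
      · ring
      · linear_combination c' 0 * h5
      · linear_combination g * h5
    · simp [tor_one_eq, brM_mk, d1_mon, d2_mon, mulA_mon, zero_mulA, mulA_zero, d1_zero,
        d2_zero, d1_smul, d2_smul, mulA_smul, smul_mulA]
      refine ⟨?_, ?_, ?_⟩ <;> match_scalars
      · ring
      · linear_combination c' 0 * h5
      · linear_combination g * h5
  · rw [LinearMap.sub_apply, adM_apply, hc]
    simp [tD1, brM_mk, d1_mon, d2_mon, mulA_mon, zero_mulA, mulA_zero, d1_zero,
        d2_zero, d1_smul, d2_smul, mulA_smul, smul_mulA, add_mulA]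
    refine ⟨?_, ?_⟩ <;> match_scalars
    · rw [hg]; ring
    · ring
  · rw [LinearMap.sub_apply, adM_apply, hc']
    simp [tD2, brM_mk, d1_mon, d2_mon, mulA_mon, zero_mulA, mulA_zero, d1_zero,
        d2_zero, d1_smul, d2_smul, mulA_smul, smul_mulA, add_mulA]
    refine ⟨?_, ?_⟩ <;> match_scalars
    · ring
    · linear_combination (2 * c 3 - c' 4) * h5

/-- The element `1 ∈ A(2)`. -/
def oneA : Mel F := (mon 0 0, (0, 0), (0, 0))

/-- The element `D₁`. -/
def pD1 : Mel F := (0, (mon 0 0, 0), (0, 0))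

/-- The element `D₂`. -/
def pD2 : Mel F := (0, (0, mon 0 0), (0, 0))

theorem brM_tD1_tD2 : brM tD1 tD2 = (oneA : Mel F) := by
  simp [tD1, tD2, oneA, brM_mk, mulA_mon, mulA_zero, zero_mulA, d1_zero, d2_zero]

theorem brM_one_tD1 [CharP F 5] : brM oneA tD1 = (pD1 : Mel F) := by
  simp [tD1, pD1, oneA, brM_mk, mulA_mon, mulA_zero, zero_mulA, d1_zero, d2_zero, d1_mon, d2_mon]

theorem brM_one_tD2 [CharP F 5] : brM oneA tD2 = (pD2 : Mel F) := by
  simp [tD2, pD2, oneA, brM_mk, mulA_mon, mulA_zero, zero_mulA, d1_zero, d2_zero, d1_mon, d2_mon]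

theorem brM_pD1_tD1 [CharP F 5] : brM pD1 tD1 = (0 : Mel F) := by
  simp [tD1, pD1, brM_mk, mulA_zero, zero_mulA, d1_zero, d2_zero, d1_mon, d2_mon]

theorem brM_pD2_tD2 [CharP F 5] : brM pD2 tD2 = (0 : Mel F) := by
  simp [tD2, pD2, brM_mk, mulA_zero, zero_mulA, d1_zero, d2_zero, d1_mon, d2_mon]

theorem smul_mon_eq_zero {r : F} {i j : ℕ} (hi : i < 5) (hj : j < 5)
    (h : r • (mon i j : A F) = 0) : r = 0 := by
  simpa [mon, hi, hj] using congrFun h (⟨i, hi⟩, ⟨j, hj⟩)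

theorem IsDer.map_tD_eq_zero [CharP F 5] {D : Mel F →ₗ[F] Mel F} (hD : IsDer D)
    {b e b' c' e' : F} (h1 : D tD1 = (0, (0, b • mon 1 3), (0, e • mon 4 1)))
    (h2 : D tD2 = (0, (b' • mon 3 1, c' • mon 2 2), (e' • mon 1 4, 0))) :
    D tD1 = 0 ∧ D tD2 = 0 := by
  have h5 : (5 : F) = 0 := five_eq_zero
  obtain ⟨p, hp⟩ : ∃ p : F, p = -(3 * b' + 4 * c') := ⟨_, rfl⟩
  have hone : D oneA = (0, (0, 0), (p • mon 2 1, (3 * b + 2 * c') • mon 1 2)) := by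
    rw [← brM_tD1_tD2, hD, h1, h2]
    simp [tD1, tD2, brM_mk, d1_mon, d2_mon, mulA_mon, zero_mulA, mulA_zero, d1_zero,
      d2_zero, d1_smul, d2_smul, mulA_smul, smul_mulA, add_mulA]
    refine ⟨?_, ?_⟩ <;> match_scalars
    · rw [hp]; ring
    · ring
  have hp1 : D pD1 = ((3 * b - 2 * c') • mon 1 2, (0, e • mon 4 1), (0, 0)) := by
    rw [← brM_one_tD1, hD, hone, h1]
    simp [tD1, oneA, brM_mk, d1_mon, d2_mon, mulA_mon, zero_mulA, mulA_zero, d1_zero,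
      d2_zero, d1_smul, d2_smul, mulA_smul, smul_mulA]
    match_scalars
    ring
  have hp2 : D pD2 = ((3 * b') • mon 2 1, (e' • mon 1 4, 0), (0, 0)) := by
    rw [← brM_one_tD2, hD, hone, h2]
    simp [tD2, oneA, brM_mk, d1_mon, d2_mon, mulA_mon, zero_mulA, mulA_zero, d1_zero,
      d2_zero, d1_smul, d2_smul, mulA_smul, smul_mulA, add_mulA]
    match_scalars
    rw [hp]; ring
  have r1 := hD pD1 tD1
  rw [brM_pD1_tD1, map_zero, hp1, h1] at r1
  simp [tD1, pD1, brM_mk, d1_mon, d2_mon, mulA_mon, zero_mulA, mulA_zero, d1_zero,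
    d2_zero, d1_smul, d2_smul, mulA_smul, smul_mulA, Prod.ext_iff] at r1
  have r2 := hD pD2 tD2
  rw [brM_pD2_tD2, map_zero, hp2, h2] at r2
  simp [tD2, pD2, brM_mk, d1_mon, d2_mon, mulA_mon, zero_mulA, mulA_zero, d1_zero,
    d2_zero, d1_smul, d2_smul, mulA_smul, smul_mulA, Prod.ext_iff] at r2
  have hb := smul_mon_eq_zero (by decide) (by decide) r1.1.2.symm
  have hc := smul_mon_eq_zero (by decide) (by decide) r1.1.1.symm
  have he := smul_mon_eq_zero (by decide) (by decide) ((smul_smul _ _ _).symm.trans r1.2.symm)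
  have hb' := smul_mon_eq_zero (by decide) (by decide) r2.1.1.symm
  have he' := smul_mon_eq_zero (by decide) (by decide) ((smul_smul _ _ _).symm.trans r2.2.symm)
  have hc0 : c' = 0 := by linear_combination c' * h5 + 2 * hc - 6 * hb
  have he0 : e = 0 := by linear_combination 3 * he - e * h5
  have he0' : e' = 0 := by linear_combination 3 * he' - e' * h5
  rw [h1, h2, hb, hc0, he0, hb', he0']
  simp

end Normalization

section Generation

/-- The inclusion `f ↦ f` of `A(2)` into `M`, as a linear map. -/
def inA : A F →ₗ[F] Mel F := LinearMap.inl F (A F) (W F × W F)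

/-- The inclusion `f ↦ f D̃₁` of `A(2)` into `M`, as a linear map. -/
def inT1 : A F →ₗ[F] Mel F :=
  LinearMap.inr F (A F) (W F × W F) ∘ₗ LinearMap.inr F (W F) (W F) ∘ₗ LinearMap.inl F (A F) (A F)

/-- The inclusion `f ↦ f D̃₂` of `A(2)` into `M`, as a linear map. -/
def inT2 : A F →ₗ[F] Mel F :=
  LinearMap.inr F (A F) (W F × W F) ∘ₗ LinearMap.inr F (W F) (W F) ∘ₗ LinearMap.inr F (A F) (A F)

theorem inA_apply (f : A F) : inA f = (f, (0, 0), (0, 0)) := rfl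

theorem inT1_apply (f : A F) : inT1 f = (0, (0, 0), (f, 0)) := rfl

theorem inT2_apply (f : A F) : inT2 f = (0, (0, 0), (0, f)) := rfl

theorem natCast_succ_ne_zero [CharP F 5] {i : ℕ} (hi : i + 1 < 5) : ((i + 1 : ℕ) : F) ≠ 0 := by
  rw [Ne, CharP.cast_eq_zero_iff F 5]
  omega

/-- A subspace of `A(2)` stable under both partial derivatives contains every divisor of each
monomial it contains. -/
theorem mon_mem_of_le [CharP F 5] {N : Submodule F (A F)} (h1 : ∀ f ∈ N, d1 f ∈ N)
    (h2 : ∀ f ∈ N, d2 f ∈ N) {i j k l : ℕ} (hi : i < 5) (hj : j < 5) (hk : k ≤ i) (hl : l ≤ j)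
    (h : mon i j ∈ N) : mon k l ∈ N := by
  have hkj : mon k j ∈ N := by
    refine Nat.decreasingInduction' (P := fun n => mon n j ∈ N) (fun n hn _ hmem => ?_) hk h
    have := h1 _ hmem
    rw [d1_mon] at this
    exact (N.smul_mem_iff (natCast_succ_ne_zero (by omega))).1 this
  refine Nat.decreasingInduction' (P := fun n => mon k n ∈ N) (fun n hn _ hmem => ?_) hl hkj
  have := h2 _ hmem
  rw [d2_mon] at this
  exact (N.smul_mem_iff (natCast_succ_ne_zero (by omega))).1 this

theorem IsDer.map_mon_of_le {D : Mel F →ₗ[F] Mel F} [CharP F 5] (hD : IsDer D)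
    (hp1 : D pD1 = 0) (hp2 : D pD2 = 0) {L : A F →ₗ[F] Mel F}
    (hL1 : ∀ f, brM pD1 (L f) = L (d1 f)) (hL2 : ∀ f, brM pD2 (L f) = L (d2 f)) {c : F}
    {i j k l : ℕ} (hi : i < 5) (hj : j < 5) (hk : k ≤ i) (hl : l ≤ j)
    (h : D (L (mon i j)) = c • L (mon i j)) : D (L (mon k l)) = c • L (mon k l) := by
  refine mon_mem_of_le (N := LinearMap.eqLocus (D ∘ₗ L) (c • L)) (fun f hf => ?_) (fun f hf => ?_)
    hi hj hk hl h
  · change D (L f) = c • L f at hf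
    change D (L (d1 f)) = c • L (d1 f)
    rw [← hL1, hD, hp1, zero_brM, zero_add, hf, brM_smul]
  · change D (L f) = c • L f at hf
    change D (L (d2 f)) = c • L (d2 f)
    rw [← hL2, hD, hp2, zero_brM, zero_add, hf, brM_smul]

theorem brM_pD1_inA [CharP F 5] (f : A F) : brM pD1 (inA f) = inA (d1 f) := by
  simp [pD1, inA_apply, brM_mk, d1_mon, d2_mon, zero_mulA, mulA_zero, d1_zero, d2_zero, one_mulA]

theorem brM_pD2_inA [CharP F 5] (f : A F) : brM pD2 (inA f) = inA (d2 f) := by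
  simp [pD2, inA_apply, brM_mk, d1_mon, d2_mon, zero_mulA, mulA_zero, d1_zero, d2_zero, one_mulA]

theorem brM_pD1_inT1 [CharP F 5] (f : A F) : brM pD1 (inT1 f) = inT1 (d1 f) := by
  simp [pD1, inT1_apply, brM_mk, d1_mon, d2_mon, zero_mulA, mulA_zero, d1_zero, d2_zero, one_mulA]

theorem brM_pD2_inT1 [CharP F 5] (f : A F) : brM pD2 (inT1 f) = inT1 (d2 f) := by
  simp [pD2, inT1_apply, brM_mk, d1_mon, d2_mon, zero_mulA, mulA_zero, d1_zero, d2_zero, one_mulA]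

theorem brM_pD1_inT2 [CharP F 5] (f : A F) : brM pD1 (inT2 f) = inT2 (d1 f) := by
  simp [pD1, inT2_apply, brM_mk, d1_mon, d2_mon, zero_mulA, mulA_zero, d1_zero, d2_zero, one_mulA]

theorem brM_pD2_inT2 [CharP F 5] (f : A F) : brM pD2 (inT2 f) = inT2 (d2 f) := by
  simp [pD2, inT2_apply, brM_mk, d1_mon, d2_mon, zero_mulA, mulA_zero, d1_zero, d2_zero, one_mulA]

theorem IsDer.brM_eq_zero {D : Mel F →ₗ[F] Mel F} (hD : IsDer D) {x y : Mel F}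
    (hx : D x = 0) (hy : D y = 0) : D (brM x y) = 0 := by
  rw [hD, hx, hy, zero_brM, brM_zero, add_zero]

theorem inT1_mon_ne_zero {i j : ℕ} (hi : i < 5) (hj : j < 5) : (inT1 (mon i j) : Mel F) ≠ 0 := by
  intro h
  have := congrFun (congrArg (fun x => x.2.2.1) h) (⟨i, hi⟩, ⟨j, hj⟩)
  simp [inT1_apply, mon] at this

theorem inT2_mon_ne_zero {i j : ℕ} (hi : i < 5) (hj : j < 5) : (inT2 (mon i j) : Mel F) ≠ 0 := by
  intro h
  have := congrFun (congrArg (fun x => x.2.2.2) h) (⟨i, hi⟩, ⟨j, hj⟩)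
  simp [inT2_apply, mon] at this

theorem IsDer.map_inT1_eq_zero [CharP F 5] {D : Mel F →ₗ[F] Mel F} (hD : IsDer D)
    (hT : TorusAdapted D) (h1 : D tD1 = 0) (hp1 : D pD1 = 0) (hp2 : D pD2 = 0) :
    D (inT1 (mon 2 4)) = 0 := by
  have h5 : (5 : F) = 0 := five_eq_zero
  obtain ⟨c, hc⟩ := hD.exists_coeff hT (e := inT1 (mon 2 4)) 3 1
    (by simp [tor_zero_eq, inT1_apply, brM_mk, d1_mon, d2_mon, mulA_mon, zero_mulA, mulA_zero,
          mulA_smul, d1_zero, d2_zero, cst_three]; module)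
    (by simp [tor_one_eq, inT1_apply, brM_mk, d1_mon, d2_mon, mulA_mon, zero_mulA, mulA_zero,
          mulA_smul, d1_zero, d2_zero, cst_one]; match_scalars; linear_combination h5)
  change D _ = (c 0 • mon 0 3, (c 1 • mon 4 1, c 2 • mon 3 2), (c 3 • mon 2 4, c 4 • mon 1 0)) at hc
  have h0 : brM tD1 (inT1 (mon 2 4)) = (0 : Mel F) := by
    simp [tD1, inT1_apply, brM_mk, zero_mulA, mulA_zero, d1_zero, d2_zero]
  have r := hD tD1 (inT1 (mon 2 4))
  rw [h0, map_zero, h1, zero_brM, zero_add, hc] at r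
  simp [tD1, brM_mk, d1_mon, d2_mon, mulA_mon, zero_mulA, mulA_zero, d1_zero,
    d2_zero, d1_smul, d2_smul, mulA_smul, smul_mulA, add_mulA, Prod.ext_iff] at r
  obtain ⟨r4, r0, r12, r2⟩ := r
  have c4 := smul_mon_eq_zero (by decide) (by decide) r4.symm
  have c0 : c 0 = 0 := r0.elim id fun h =>
    smul_mon_eq_zero (i := 0) (j := 3) (by decide) (by decide) (by rw [h, smul_zero])
  have c2 := smul_mon_eq_zero (by decide) (by decide) ((smul_smul _ _ _).symm.trans r2.symm)
  have c2 : c 2 = 0 := by linear_combination 2 * c2 - c 2 * h5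
  have c1 : c 1 = 0 := by
    refine smul_mon_eq_zero (i := 3) (j := 1) (by decide) (by decide) ?_
    rw [c2] at r12
    refine Eq.trans ?_ r12.symm
    match_scalars
    linear_combination c 1 * h5
  rw [c0, c1, c2, c4] at hc
  have hc : D (inT1 (mon 2 4)) = c 3 • inT1 (mon 2 4) := by rw [hc]; simp [inT1_apply]
  have h := hD.map_mon_of_le hp1 hp2 brM_pD1_inT1 brM_pD2_inT1 (k := 0) (l := 0)
    (by decide) (by decide) (by decide) (by decide) hc
  have c3 : c 3 = 0 := (smul_eq_zero.1 (h.symm.trans h1)).resolve_right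
    (inT1_mon_ne_zero (by decide) (by decide))
  rw [hc, c3, zero_smul]

theorem IsDer.map_inT2_eq_zero [CharP F 5] {D : Mel F →ₗ[F] Mel F} (hD : IsDer D)
    (hT : TorusAdapted D) (h2 : D tD2 = 0) (hp1 : D pD1 = 0) (hp2 : D pD2 = 0) :
    D (inT2 (mon 4 2)) = 0 := by
  have h5 : (5 : F) = 0 := five_eq_zero
  obtain ⟨c, hc⟩ := hD.exists_coeff hT (e := inT2 (mon 4 2)) 1 3
    (by simp [tor_zero_eq, inT2_apply, brM_mk, d1_mon, d2_mon, mulA_mon, zero_mulA, mulA_zero,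
          mulA_smul, d1_zero, d2_zero, cst_one]; match_scalars; linear_combination h5)
    (by simp [tor_one_eq, inT2_apply, brM_mk, d1_mon, d2_mon, mulA_mon, zero_mulA, mulA_zero,
          mulA_smul, d1_zero, d2_zero, cst_three]; module)
  change D _ = (c 0 • mon 3 0, (c 1 • mon 2 3, c 2 • mon 1 4), (c 3 • mon 0 1, c 4 • mon 4 2)) at hc
  have h0 : brM tD2 (inT2 (mon 4 2)) = (0 : Mel F) := by
    simp [tD2, inT2_apply, brM_mk, zero_mulA, mulA_zero, d1_zero, d2_zero]
  have r := hD tD2 (inT2 (mon 4 2))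
  rw [h0, map_zero, h2, zero_brM, zero_add, hc] at r
  simp [tD2, brM_mk, d1_mon, d2_mon, mulA_mon, zero_mulA, mulA_zero, d1_zero,
    d2_zero, d1_smul, d2_smul, mulA_smul, smul_mulA, add_mulA, Prod.ext_iff] at r
  obtain ⟨r3, r0, r1, r12⟩ := r
  have c3 : c 3 = 0 := r3.elim id fun h =>
    smul_mon_eq_zero (i := 0) (j := 1) (by decide) (by decide) (by rw [h, smul_zero])
  have c0 : c 0 = 0 := r0.elim id fun h =>
    smul_mon_eq_zero (i := 3) (j := 0) (by decide) (by decide) (by rw [h, smul_zero])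
  have c1 := smul_mon_eq_zero (by decide) (by decide) ((smul_smul _ _ _).symm.trans r1.symm)
  have c1 : c 1 = 0 := by linear_combination 2 * c1 - c 1 * h5
  have c2 : c 2 = 0 := by
    refine smul_mon_eq_zero (i := 1) (j := 3) (by decide) (by decide) ?_
    rw [c1] at r12
    refine Eq.trans ?_ r12.symm
    match_scalars
    linear_combination c 2 * h5
  rw [c0, c1, c2, c3] at hc
  have hc : D (inT2 (mon 4 2)) = c 4 • inT2 (mon 4 2) := by rw [hc]; simp [inT2_apply]
  have h := hD.map_mon_of_le hp1 hp2 brM_pD1_inT2 brM_pD2_inT2 (k := 0) (l := 0)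
    (by decide) (by decide) (by decide) (by decide) hc
  have c4 : c 4 = 0 := (smul_eq_zero.1 (h.symm.trans h2)).resolve_right
    (inT2_mon_ne_zero (by decide) (by decide))
  rw [hc, c4, zero_smul]

theorem IsDer.eq_zero_of_generators [CharP F 5] {D : Mel F →ₗ[F] Mel F} (hD : IsDer D)
    (h1 : D tD1 = 0) (h2 : D tD2 = 0) (hp1 : D pD1 = 0) (hp2 : D pD2 = 0)
    (hs1 : D (inT1 (mon 2 4)) = 0) (hs2 : D (inT2 (mon 4 2)) = 0) : D = 0 := by
  have hA24 : D (inA (mon 2 4)) = 0 := by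
    rw [show inA (mon 2 4) = brM (inT1 (mon 2 4)) (tD2 : Mel F) by
      simp [tD2, inA_apply, inT1_apply, brM_mk, mulA_mon, zero_mulA, mulA_zero, d1_zero, d2_zero]]
    exact hD.brM_eq_zero hs1 h2
  have hA42 : D (inA (mon 4 2)) = 0 := by
    rw [show inA (mon 4 2) = brM (tD1 : Mel F) (inT2 (mon 4 2)) by
      simp [tD1, inA_apply, inT2_apply, brM_mk, mulA_mon, zero_mulA, mulA_zero, d1_zero, d2_zero]]
    exact hD.brM_eq_zero h1 hs2
  have hA03 : D (inA (mon 0 3)) = 0 := by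
    simpa using hD.map_mon_of_le hp1 hp2 brM_pD1_inA brM_pD2_inA (c := 0) (i := 2) (j := 4)
      (k := 0) (l := 3) (by decide) (by decide) (by decide) (by decide) (by simpa using hA24)
  have hA30 : D (inA (mon 3 0)) = 0 := by
    simpa using hD.map_mon_of_le hp1 hp2 brM_pD1_inA brM_pD2_inA (c := 0) (i := 4) (j := 2)
      (k := 3) (l := 0) (by decide) (by decide) (by decide) (by decide) (by simpa using hA42)
  have hT1_44 : D (inT1 (mon 4 4)) = 0 := by
    rw [show inT1 (mon 4 4) = (2 : F) • brM (inA (mon 4 2)) (inA (mon 0 3)) by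
      simp [inA_apply, inT1_apply, brM_mk, mulA_mon, zero_mulA, mulA_zero, d1_zero, d2_zero,
        d1_mon, d2_mon, mulA_smul, mon_eq_zero]
      match_scalars
      linear_combination five_eq_zero (F := F), map_smul, hD.brM_eq_zero hA42 hA03, smul_zero]
  have hT2_44 : D (inT2 (mon 4 4)) = 0 := by
    rw [show inT2 (mon 4 4) = (3 : F) • brM (inA (mon 2 4)) (inA (mon 3 0)) by
      simp [inA_apply, inT2_apply, brM_mk, mulA_mon, zero_mulA, mulA_zero, d1_zero, d2_zero,
        d1_mon, d2_mon, mulA_smul, mon_eq_zero]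
      match_scalars
      linear_combination -five_eq_zero (F := F), map_smul, hD.brM_eq_zero hA24 hA30, smul_zero]
  have hT1 (f : A F) : D (inT1 f) = 0 := by
    induction f using A_induction with
    | hmon i j =>
      by_cases hij : i ≤ 4 ∧ j ≤ 4
      · simpa using hD.map_mon_of_le hp1 hp2 brM_pD1_inT1 brM_pD2_inT1 (c := 0)
          (by decide) (by decide) hij.1 hij.2 (by simpa using hT1_44)
      · rw [mon_eq_zero (by omega), map_zero, map_zero]
    | hadd f g hf hg => rw [map_add, map_add, hf, hg, add_zero]
    | hsmul c f hf => rw [map_smul, map_smul, hf, smul_zero]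
  have hT2 (f : A F) : D (inT2 f) = 0 := by
    induction f using A_induction with
    | hmon i j =>
      by_cases hij : i ≤ 4 ∧ j ≤ 4
      · simpa using hD.map_mon_of_le hp1 hp2 brM_pD1_inT2 brM_pD2_inT2 (c := 0)
          (by decide) (by decide) hij.1 hij.2 (by simpa using hT2_44)
      · rw [mon_eq_zero (by omega), map_zero, map_zero]
    | hadd f g hf hg => rw [map_add, map_add, hf, hg, add_zero]
    | hsmul c f hf => rw [map_smul, map_smul, hf, smul_zero]
  have hA (f : A F) : D (inA f) = 0 := by
    rw [show inA f = brM (tD1 : Mel F) (inT2 f) by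
      simp [tD1, inA_apply, inT2_apply, brM_mk, one_mulA, zero_mulA, mulA_zero, d1_zero, d2_zero]]
    exact hD.brM_eq_zero h1 (hT2 f)
  refine LinearMap.ext fun x => ?_
  obtain ⟨a, ⟨b, c⟩, d, e⟩ := x
  have hx : ((a, (b, c), (d, e)) : Mel F) =
      inA a + (brM (inA b) tD1 + brM (inA c) tD2) + (inT1 d + inT2 e) := by
    simp [tD1, tD2, inA_apply, inT1_apply, inT2_apply, brM_mk, mulA_one, zero_mulA, mulA_zero,
      d1_zero, d2_zero, d1_mon, d2_mon]
  rw [hx, map_add, map_add, map_add, map_add, hA, hD.brM_eq_zero (hA b) h1,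
    hD.brM_eq_zero (hA c) h2, hT1, hT2]
  simp

end Generation

/-- The first cohomology of the Melikian algebra with values in the adjoint
representation vanishes: every derivation of `M` is inner. -/
theorem melikian_H1 (F : Type*) [Field F] [CharP F 5] :
    ∀ D : Mel F →ₗ[F] Mel F,
      (∀ x y : Mel F, D (brM x y) = brM (D x) y + brM x (D y)) →
      ∃ m : Mel F, ∀ x : Mel F, D x = brM m x := by
  intro D hD
  obtain ⟨m, hm⟩ := IsDer.exists_torusAdapted hD
  have hD1 := IsDer.sub_adM hD m
  obtain ⟨n, hn, ⟨b, e, h1⟩, b', c', e', h2⟩ := hD1.exists_normalized hm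
  have hD2 := hD1.sub_adM n
  obtain ⟨h1, h2⟩ := hD2.map_tD_eq_zero h1 h2
  have hone : (D - adM m - adM n) oneA = 0 := by
    rw [← brM_tD1_tD2]; exact hD2.brM_eq_zero h1 h2
  have hp1 : (D - adM m - adM n) pD1 = 0 := by
    rw [← brM_one_tD1]; exact hD2.brM_eq_zero hone h1
  have hp2 : (D - adM m - adM n) pD2 = 0 := by
    rw [← brM_one_tD2]; exact hD2.brM_eq_zero hone h2
  have h0 := hD2.eq_zero_of_generators h1 h2 hp1 hp2 (hD2.map_inT1_eq_zero hn h1 hp1 hp2)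
    (hD2.map_inT2_eq_zero hn h2 hp1 hp2)
  refine ⟨m + n, fun x => ?_⟩
  have hx := LinearMap.congr_fun h0 x
  simp only [LinearMap.sub_apply, adM_apply, LinearMap.zero_apply] at hx
  rw [add_brM, ← sub_eq_zero, ← sub_sub, hx]

end Melikian
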